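/- Let n ≥ 2 be an integer such that g_n(X) = X^n + X − 1 is irreducible over ℚ, let θ_n ∈ ℂ be a root of g_n, and let r be a nonzero integer. Then the discriminant of rθ_n, i.e. the discriminant of the ℚ-basis (1, rθ_n, …, (rθ_n)^{n−1}) of K_n = ℚ(θ_n), equals (−1)^{(n−1)(n−2)/2} · r^{n(n−1)} · (n^n + (n−1)^{n−1}). -/

import Mathlib

open Polynomial IntermediateField

/-- The norm of `x - α`, for `α` the generator of a power basis, is the value at `x` of the
minimal polynomial of `α`. -/
lemma PowerBasis.norm_algebraMap_sub_gen {K L : Type*} [Field K] [Field L] [Algebra K L]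
    (pb : PowerBasis K L) (x : K) :
    Algebra.norm K (algebraMap K L x - pb.gen) = (minpoly K pb.gen).eval x := by
  rw [Algebra.norm_eq_matrix_det pb.basis, ← charpoly_leftMulMatrix, Matrix.eval_charpoly,
    map_sub, AlgHom.commutes]
  rfl

/-- Scaling the generator of a family of powers by `c` multiplies the discriminant by
`c ^ (n * (n - 1))`. -/
lemma Algebra.discr_algebraMap_mul_pow {A B : Type*} [CommRing A] [CommRing B] [Algebra A B]
    (n : ℕ) (c : A) (x : B) :
    Algebra.discr A (fun i : Fin n => (algebraMap A B c * x) ^ (i : ℕ)) =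
      c ^ (n * (n - 1)) * Algebra.discr A (fun i : Fin n => x ^ (i : ℕ)) := by
  have h := Algebra.discr_of_matrix_vecMul (A := A) (fun i : Fin n => x ^ (i : ℕ))
    (Matrix.diagonal fun i : Fin n => c ^ (i : ℕ))
  rw [Matrix.det_diagonal, Finset.prod_pow_eq_pow_sum, ← pow_mul,
    Fin.sum_univ_eq_sum_range (fun i => i) n, Finset.sum_range_id_mul_two] at h
  rw [← h]
  congr 1
  ext i
  rw [Matrix.diagonal_map (map_zero _), Matrix.vecMul_diagonal, mul_pow, mul_comm]
  simp

/-- The norm of `n θ ^ (n - 1) + 1`, where `θ` generates the extension and has minimal polynomial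
`X ^ n + X - 1`. -/
lemma norm_derivative_X_pow_add_X_sub_one {L : Type*} [Field L] [Algebra ℚ L]
    (pb : PowerBasis ℚ L) (m : ℕ) (hdim : pb.dim = m + 2)
    (hmin : minpoly ℚ pb.gen = X ^ (m + 2) + X - 1) :
    Algebra.norm ℚ (aeval pb.gen (derivative (X ^ (m + 2) + X - 1 : ℚ[X]))) =
      (-1) ^ (m + 1) * ((m + 2) ^ (m + 2) + (m + 1) ^ (m + 1)) := by
  have hgen : pb.gen ^ (m + 2) = 1 - pb.gen := by
    have := minpoly.aeval ℚ pb.gen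
    rw [hmin] at this
    simp only [map_sub, map_add, map_pow, aeval_X, map_one] at this
    linear_combination this
  have hm : (m + 1 : ℚ) ≠ 0 := by positivity
  have hfac : pb.gen * aeval pb.gen (derivative (X ^ (m + 2) + X - 1 : ℚ[X])) =
      algebraMap ℚ L (m + 1) * (algebraMap ℚ L ((m + 2) / (m + 1)) - pb.gen) := by
    simp only [mul_sub, ← map_mul, mul_div_cancel₀ _ hm]
    simp only [map_add, map_natCast, map_ofNat, map_one, derivative_X_pow,
      derivative_X, derivative_one, map_sub, map_mul, map_pow, aeval_X, sub_zero,
      Nat.add_one_sub_one, Nat.cast_add, Nat.cast_ofNat]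
    linear_combination (m + 2 : L) * hgen
  have hnorm : Algebra.norm ℚ pb.gen = (-1) ^ (m + 1) := by
    rw [Algebra.PowerBasis.norm_gen_eq_coeff_zero_minpoly, hmin, hdim]
    simp [pow_succ]
  have h := congrArg (Algebra.norm ℚ) hfac
  rw [map_mul, map_mul, hnorm, PowerBasis.norm_algebraMap_sub_gen, hmin,
    Algebra.norm_algebraMap, pb.finrank, hdim] at h
  simp only [eval_sub, eval_add, eval_pow, eval_X, eval_one, div_pow] at h
  have hsq : ((-1 : ℚ) ^ (m + 1)) * (-1) ^ (m + 1) = 1 := by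
    rw [← mul_pow]; simp
  have h2 : (m + 1 : ℚ) ^ (m + 2) * ((m + 2) ^ (m + 2) / (m + 1) ^ (m + 2) +
      (m + 2) / (m + 1) - 1) = (m + 2) ^ (m + 2) + (m + 1) ^ (m + 1) := by
    field_simp
    ring
  rw [← h2, ← h, ← mul_assoc, hsq, one_mul]

/-- For `n ≥ 2` with `gₙ = Xⁿ + X - 1` irreducible over `ℚ`, `θ` a root of `gₙ`
generating the number field `Kₙ = ℚ(θ)`, and `r` a nonzero integer, the discriminant
of the `ℚ`-basis `(1, rθ, …, (rθ)^{n-1})` of `Kₙ` equals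
`(-1)^{(n-1)(n-2)/2} · r^{n(n-1)} · (nⁿ + (n-1)^{n-1})`. -/
theorem stmt3 (n : ℕ) (hn : 2 ≤ n)
    (hirr : Irreducible ((X : ℚ[X]) ^ n + X - 1))
    (K : Type*) [Field K] [NumberField K]
    (θ : K) (hθ : Polynomial.aeval θ ((X : ℚ[X]) ^ n + X - 1) = 0)
    (hgen : IntermediateField.adjoin ℚ {θ} = ⊤)
    (r : ℤ) (hr : r ≠ 0) :
    Algebra.discr ℚ (fun i : Fin n => ((r : K) * θ) ^ (i : ℕ))
      = (-1 : ℚ) ^ ((n - 1) * (n - 2) / 2) * (r : ℚ) ^ (n * (n - 1))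
          * ((n ^ n + (n - 1) ^ (n - 1) : ℕ) : ℚ) := by
  obtain ⟨m, rfl⟩ := Nat.exists_eq_add_of_le' hn
  have hdeg : ((X : ℚ[X]) ^ (m + 2) + X - 1).natDegree = m + 2 := by
    compute_degree!
  have hmonic : ((X : ℚ[X]) ^ (m + 2) + X - 1).Monic := by
    rw [Monic, leadingCoeff, hdeg]
    simp [coeff_X, coeff_one]
  have hmin : minpoly ℚ θ = X ^ (m + 2) + X - 1 :=
    (minpoly.eq_of_irreducible_of_monic hirr hθ hmonic).symm
  have hint : IsIntegral ℚ θ := Algebra.IsIntegral.isIntegral θ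
  obtain ⟨pb, rfl⟩ : ∃ pb : PowerBasis ℚ K, pb.gen = θ := by
    refine ⟨PowerBasis.ofAdjoinEqTop' hint ?_, PowerBasis.ofAdjoinEqTop'_gen hint _⟩
    rw [← IntermediateField.adjoin_simple_toSubalgebra_of_isAlgebraic hint.isAlgebraic, hgen]
    rfl
  have hdim : pb.dim = m + 2 := by rw [← pb.natDegree_minpoly, hmin, hdeg]
  have hbasis : Algebra.discr ℚ (fun i : Fin (m + 2) => pb.gen ^ (i : ℕ)) =
      Algebra.discr ℚ pb.basis := by
    rw [← Algebra.discr_reindex ℚ pb.basis (finCongr hdim)]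
    congr 1
    ext i
    simp
  have hscale := Algebra.discr_algebraMap_mul_pow (m + 2) (r : ℚ) pb.gen
  rw [map_intCast] at hscale
  rw [hscale, hbasis, Algebra.discr_powerBasis_eq_norm, hmin,
    norm_derivative_X_pow_add_X_sub_one pb m hdim hmin, pb.finrank, hdim]
  have hexp : (m + 2) * (m + 2 - 1) / 2 = (m + 1) * m / 2 + (m + 1) := by
    rw [show (m + 2) * (m + 2 - 1) = (m + 1) * m + (m + 1) * 2 by
      simp only [show m + 2 - 1 = m + 1 from rfl]; ring,
      Nat.add_mul_div_right _ _ two_pos]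
  have hsq : ((-1 : ℚ) ^ (m + 1)) * (-1) ^ (m + 1) = 1 := by
    rw [← mul_pow]; simp
  rw [hexp, pow_add]
  simp only [show m + 2 - 1 = m + 1 from rfl, Nat.add_sub_cancel]
  push_cast
  linear_combination (r : ℚ) ^ ((m + 2) * (m + 1)) * (-1) ^ ((m + 1) * m / 2) *
    ((m + 2) ^ (m + 2) + (m + 1) ^ (m + 1)) * hsq
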